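/- Let d ≥ 2 and α < 1. For all sufficiently small ε > 0 (depending on α) there exists c(ε) > 0 such that ℙ-almost surely, for all sufficiently large t, P₀(ℓ_t(ℋ_*(t)) ≤ 1) ≤ exp(−t^{c(ε)}), where ℋ_*(t) = {x ∈ ℤ^d : z(x) ≥ t^{1/α − ε}}. -/

import Mathlib

open MeasureTheory ProbabilityTheory Filter Set

noncomputable section

/-- `n`-step transition probabilities of the discrete-time simple random walk on `ℤ^m`. -/
def srwKernel (m : ℕ) : ℕ → (Fin m → ℤ) → (Fin m → ℤ) → ℝ
  | 0, x, y => if x = y then 1 else 0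
  | n + 1, x, y =>
      (∑ i : Fin m, (srwKernel m n (Function.update x i (x i + 1)) y
        + srwKernel m n (Function.update x i (x i - 1)) y)) / (2 * m)

/-- Transition kernel of the continuous-time simple random walk on `ℤ^m` which jumps to
each of its `2m` nearest neighbours at rate `1` (total jump rate `2m`). -/
def heatKernel (m : ℕ) (t : ℝ) (x y : Fin m → ℤ) : ℝ :=
  ∑' n : ℕ, Real.exp (-(2 * m) * t) * ((2 * m) * t) ^ n / n.factorial * srwKernel m n x y

/-- `(P, S)` is (a realization of) the continuous-time simple random walk on `ℤ^m`:
under `P x` the process `S` starts at `x`, has right-continuous (piecewise constant)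
paths, and its finite-dimensional distributions are given by the heat kernel. -/
structure IsCTSRW (m : ℕ) {Ω : Type*} [MeasurableSpace Ω]
    (P : (Fin m → ℤ) → Measure Ω) (S : ℝ → Ω → (Fin m → ℤ)) : Prop where
  prob : ∀ x, IsProbabilityMeasure (P x)
  meas : Measurable fun p : ℝ × Ω => S p.1 p.2
  start : ∀ x, ∀ᵐ ω ∂ P x, S 0 ω = x
  rightCont : ∀ x, ∀ᵐ ω ∂ P x, ∀ t : ℝ, 0 ≤ t →
    ∃ ε > (0 : ℝ), ∀ u, t ≤ u → u < t + ε → S u ω = S t ω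
  fdd : ∀ x (n : ℕ) (t : Fin (n + 1) → ℝ), 0 ≤ t 0 →
    (∀ i : Fin n, t i.castSucc ≤ t i.succ) →
    ∀ y : Fin (n + 1) → (Fin m → ℤ),
      (P x {ω | ∀ i, S (t i) ω = y i}).toReal
        = heatKernel m (t 0) x (y 0)
          * ∏ i : Fin n, heatKernel m (t i.succ - t i.castSucc) (y i.castSucc) (y i.succ)

/-- `z` is an i.i.d. nonnegative random scenery on `ℤ^d` whose common upper tail decays
like `r^{-α+o(1)}`. -/
structure IsScenery (d : ℕ) (α : ℝ) {Ω : Type*} [MeasurableSpace Ω]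
    (μ : Measure Ω) (z : (Fin d → ℤ) → Ω → ℝ) : Prop where
  prob : IsProbabilityMeasure μ
  meas : ∀ x, Measurable (z x)
  nonneg : ∀ x ω, 0 ≤ z x ω
  indep : iIndepFun z μ
  ident : ∀ x, IdentDistrib (z x) (z 0) μ μ
  tail : Tendsto (fun r : ℝ => Real.log (μ {ω | r < z 0 ω}).toReal / Real.log r)
    atTop (nhds (-α))

/-- The random walk in random scenery `A(t) = ∫₀ᵗ z(S_u) du`. -/
def rwrs {Ωz Ωw : Type*} (d : ℕ) (z : (Fin d → ℤ) → Ωz → ℝ)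
    (S : ℝ → Ωw → (Fin d → ℤ)) (t : ℝ) (ζ : Ωz) (ω : Ωw) : ℝ :=
  ∫ u in Set.Ioc (0 : ℝ) t, z (S u ω) ζ

end
open MeasureTheory ProbabilityTheory Filter Set

noncomputable section

/-- The occupation time measure `ℓ_t(B) = ∫₀ᵗ 1_{S_u ∈ B} du` of the walk. -/
def occTime (d : ℕ) {Ωw : Type*} (S : ℝ → Ωw → (Fin d → ℤ))
    (B : Set (Fin d → ℤ)) (t : ℝ) (ω : Ωw) : ℝ :=
  ∫ u in Set.Ioc (0 : ℝ) t, Set.indicator B (fun _ => (1 : ℝ)) (S u ω)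

end

/-!
By Fourier inversion on the torus the heat kernel is at most `t ^ (-d / 2)`. In dimension `d ≥ 2`
the walk observed at the times `s, s + 1, s + 2, …` is therefore, given its past, back at its
current position after `r` steps with probability at most `1 / r`. So a block of `L` steps has
`O(L log L)` expected self-intersections, and by the Cauchy–Schwarz inequality it visits at least
`L / O(log L)` distinct sites with conditional probability at least `1 / 2`. Splitting `n` steps
into `n ^ κ` blocks, the walk visits `n ^ (1 - 2 κ)` distinct sites outside an event of probability
at most `exp (-n ^ κ / 4)`.

If `a < 1 / α`, each site has `z ≥ n ^ a` with probability at least `n ^ (-γ)` for some `γ < 1`,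
independently of the others. Averaging over the scenery, the number of visits to the high sites at
times `s + k`, `k < n`, hence has a stretched-exponentially small Laplace transform. The occupation
time is the average of these numbers over `s ∈ (0, 1]`, so by Jensen's inequality the same holds for
it. Markov's inequality and the Borel–Cantelli lemma give the almost sure bound at integer times,
and monotonicity of the occupation time in `t` and in the level set, with a little room in `a`,
extends it to all times.
-/

open scoped ENNReal NNReal

section HeatKernel

open UnitAddTorus

instance : IsProbabilityMeasure (volume : Measure UnitAddCircle) := ⟨UnitAddCircle.measure_univ⟩

lemma integral_fourier (n : ℤ) : ∫ θ : UnitAddCircle, fourier n θ = if n = 0 then 1 else 0 := by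
  split_ifs with hn
  · simp [hn]
  · exact integral_eq_zero_of_add_right_eq_neg (fourier_add_half_inv_index hn one_pos)

lemma integral_mFourier {ι : Type*} [Fintype ι] (n : ι → ℤ) :
    ∫ θ : UnitAddTorus ι, mFourier n θ = if n = 0 then 1 else 0 := by
  calc ∫ θ : UnitAddTorus ι, mFourier n θ
      = ∏ i, ∫ θ : UnitAddCircle, fourier (n i) θ :=
        integral_fintype_prod_volume_eq_prod fun i (θ : UnitAddCircle) => fourier (n i) θ
    _ = if n = 0 then 1 else 0 := by
        simp only [integral_fourier, Finset.prod_ite_zero, Finset.prod_const_one, Finset.mem_univ,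
          forall_const, funext_iff, Pi.zero_apply]

/-- The sum of the characters of the torus over the `2m` unit vectors of `ℤ^m`: the Fourier
multiplier of the adjacency operator of the lattice. -/
noncomputable def latticeSymbol (m : ℕ) : C(UnitAddTorus (Fin m), ℂ) :=
  ∑ i, (mFourier (Pi.single i 1) + mFourier (-Pi.single i 1))

variable {m : ℕ}

lemma norm_mFourier_apply {ι : Type*} [Fintype ι] (n : ι → ℤ) (θ : UnitAddTorus ι) :
    ‖mFourier n θ‖ = 1 := by
  simp only [mFourier, ContinuousMap.coe_mk, norm_prod, fourier_apply, Circle.norm_coe,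
    Finset.prod_const_one]

lemma latticeSymbol_apply (θ : UnitAddTorus (Fin m)) :
    latticeSymbol m θ = ((∑ i, 2 * (fourier 1 (θ i)).re : ℝ) : ℂ) := by
  simp only [latticeSymbol, ContinuousMap.coe_sum, Finset.sum_apply, ContinuousMap.add_apply,
    mFourier_neg, Complex.add_conj, mFourier_single, Complex.ofReal_sum]

lemma norm_latticeSymbol_apply_le (θ : UnitAddTorus (Fin m)) : ‖latticeSymbol m θ‖ ≤ 2 * m := by
  calc ‖latticeSymbol m θ‖
      ≤ ∑ i : Fin m, (‖mFourier (Pi.single i 1) θ‖ + ‖mFourier (-Pi.single i 1) θ‖) := by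
        simp only [latticeSymbol, ContinuousMap.coe_sum, Finset.sum_apply, ContinuousMap.add_apply]
        exact norm_sum_le_of_le _ fun i _ => norm_add_le _ _
    _ = 2 * m := by
        simp only [norm_mFourier_apply, Finset.sum_const, Finset.card_univ, Fintype.card_fin,
          nsmul_eq_mul]
        ring

lemma integrable_latticeSymbol_pow_mul_mFourier (n : ℕ) (v : Fin m → ℤ) :
    Integrable fun θ => latticeSymbol m θ ^ n * mFourier v θ := by
  refine Integrable.of_bound (C := (2 * m) ^ n) (by fun_prop) (ae_of_all _ fun θ => ?_)
  rw [norm_mul, norm_pow, norm_mFourier_apply, mul_one]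
  exact pow_le_pow_left₀ (norm_nonneg _) (norm_latticeSymbol_apply_le θ) n

lemma srwKernel_eq_integral (n : ℕ) (x y : Fin m → ℤ) :
    ((2 * m) ^ n * srwKernel m n x y : ℂ)
      = ∫ θ, latticeSymbol m θ ^ n * mFourier (x - y) θ := by
  induction n generalizing x with
  | zero =>
    simp only [pow_zero, one_mul, integral_mFourier, sub_eq_zero, srwKernel, apply_ite
      Complex.ofReal, Complex.ofReal_one, Complex.ofReal_zero]
  | succ n ih =>
    have add_single (i : Fin m) (a : ℤ) :
        Function.update x i (x i + a) - y = x - y + Pi.single i a := by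
      ext j
      obtain rfl | hj := eq_or_ne j i
      · simp only [Pi.sub_apply, Pi.add_apply, Function.update_self, Pi.single_eq_same]
        ring
      · simp [hj]
    have expand (θ : UnitAddTorus (Fin m)) :
        latticeSymbol m θ ^ (n + 1) * mFourier (x - y) θ
          = ∑ i, (latticeSymbol m θ ^ n * mFourier (Function.update x i (x i + 1) - y) θ
            + latticeSymbol m θ ^ n * mFourier (Function.update x i (x i - 1) - y) θ) := by
      simp only [sub_eq_add_neg (x _) 1, add_single, mFourier_add, Pi.single_neg, ← mul_add,
        ← Finset.mul_sum]
      rw [pow_succ, latticeSymbol]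
      simp only [ContinuousMap.coe_sum, Finset.sum_apply, ContinuousMap.add_apply]
      ring
    simp_rw [expand]
    rw [integral_finsetSum]
    swap
    · exact fun i _ => (integrable_latticeSymbol_pow_mul_mFourier n _).add
        (integrable_latticeSymbol_pow_mul_mFourier n _)
    simp_rw [integral_add (integrable_latticeSymbol_pow_mul_mFourier n _)
      (integrable_latticeSymbol_pow_mul_mFourier n _), ← ih, ← mul_add, ← Finset.mul_sum]
    obtain rfl | hm := eq_or_ne m 0
    · simp
    · simp only [srwKernel, Complex.ofReal_div, Complex.ofReal_sum, Complex.ofReal_add,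
        Complex.ofReal_mul, Complex.ofReal_ofNat, Complex.ofReal_natCast]
      field_simp
      ring

lemma heatKernel_eq_integral {t : ℝ} (ht : 0 ≤ t) (x y : Fin m → ℤ) :
    (heatKernel m t x y : ℂ)
      = ∫ θ, Complex.exp (-(2 * m) * t + t * latticeSymbol m θ) * mFourier (x - y) θ := by
  set F : ℕ → UnitAddTorus (Fin m) → ℂ := fun n θ =>
    Complex.exp (-(2 * m) * t) * (t ^ n / n.factorial)
      * (latticeSymbol m θ ^ n * mFourier (x - y) θ)
  have integrable_F (n : ℕ) : Integrable (F n) :=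
    (integrable_latticeSymbol_pow_mul_mFourier n _).const_mul _
  have norm_F_le (n : ℕ) (θ : UnitAddTorus (Fin m)) :
      ‖F n θ‖ ≤ ‖Complex.exp (-(2 * m) * t)‖ * ((t * (2 * m)) ^ n / n.factorial) := by
    simp only [F, norm_mul, norm_div, norm_pow, norm_mFourier_apply, mul_one, Complex.norm_real,
      Complex.norm_natCast, Real.norm_of_nonneg ht, mul_pow t, mul_assoc, mul_div_right_comm]
    gcongr
    exact norm_latticeSymbol_apply_le θ
  have summable_F : Summable fun n => ∫ θ, ‖F n θ‖ := by
    refine .of_nonneg_of_le (fun n => by positivity) (fun n => ?_)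
      ((Real.summable_pow_div_factorial (t * (2 * m))).mul_left ‖Complex.exp (-(2 * m) * t)‖)
    simpa using integral_mono (integrable_F n).norm (integrable_const _) (norm_F_le n)
  have tsum_F (θ : UnitAddTorus (Fin m)) :
      ∑' n, F n θ = Complex.exp (-(2 * m) * t + t * latticeSymbol m θ) * mFourier (x - y) θ := by
    have : HasSum (fun n : ℕ => (t * latticeSymbol m θ) ^ n / (n.factorial : ℂ))
        (Complex.exp (t * latticeSymbol m θ)) := by
      rw [Complex.exp_eq_exp_ℂ]
      exact NormedSpace.expSeries_div_hasSum_exp _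
    rw [Complex.exp_add, mul_right_comm, ← this.tsum_eq, ← tsum_mul_left]
    exact tsum_congr fun n => by simp only [F]; ring
  simp_rw [← tsum_F, ← integral_tsum_of_summable_integral_norm integrable_F summable_F, F,
    integral_const_mul, ← srwKernel_eq_integral, heatKernel, Complex.ofReal_tsum]
  exact tsum_congr fun n => by push_cast; ring

lemma integral_exp_re_fourier_le {t : ℝ} (ht : 0 < t) :
    ∫ θ : UnitAddCircle, Real.exp (-2 * t * (1 - (fourier 1 θ).re)) ≤ (√t)⁻¹ := by
  have fourier_re (θ : ℝ) : (fourier 1 (θ : UnitAddCircle)).re = Real.cos (2 * Real.pi * θ) := by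
    rw [fourier_coe_apply, ← Complex.exp_ofReal_mul_I_re]
    congr 2
    push_cast
    ring
  have quadratic_bound {θ : ℝ} (hθ : θ ∈ Ioc (-1 / 2 : ℝ) (-1 / 2 + 1)) :
      8 * θ ^ 2 ≤ 1 - Real.cos (2 * Real.pi * θ) := by
    have hπ := Real.pi_pos
    have := Real.cos_le_one_sub_mul_cos_sq (x := 2 * Real.pi * θ)
      (abs_le.2 ⟨by nlinarith [hθ.1], by nlinarith [hθ.2]⟩)
    have eq : 2 / Real.pi ^ 2 * (2 * Real.pi * θ) ^ 2 = 8 * θ ^ 2 := by field_simp; ring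
    linarith
  have integrable_gaussian : Integrable fun θ : ℝ => Real.exp (-(16 * t) * θ ^ 2) :=
    integrable_exp_neg_mul_sq (by positivity)
  calc ∫ θ : UnitAddCircle, Real.exp (-2 * t * (1 - (fourier 1 θ).re))
      = ∫ θ in Ioc (-1 / 2 : ℝ) (-1 / 2 + 1),
          Real.exp (-2 * t * (1 - Real.cos (2 * Real.pi * θ))) := by
        rw [← UnitAddCircle.integral_preimage (-1 / 2)]
        simp_rw [fourier_re]
    _ ≤ ∫ θ in Ioc (-1 / 2 : ℝ) (-1 / 2 + 1), Real.exp (-(16 * t) * θ ^ 2) := by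
        refine setIntegral_mono_on (Continuous.integrableOn_Ioc (by fun_prop))
          integrable_gaussian.integrableOn measurableSet_Ioc fun θ hθ => Real.exp_le_exp.2 ?_
        nlinarith [quadratic_bound hθ]
    _ ≤ ∫ θ : ℝ, Real.exp (-(16 * t) * θ ^ 2) :=
        setIntegral_le_integral integrable_gaussian (ae_of_all _ fun θ => (Real.exp_pos _).le)
    _ = √(Real.pi / (16 * t)) := integral_gaussian _
    _ ≤ (√t)⁻¹ := by
        rw [← Real.sqrt_inv]
        refine Real.sqrt_le_sqrt ?_
        rw [div_le_iff₀ (by positivity), mul_comm 16, inv_mul_cancel_left₀ ht.ne']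
        linarith [Real.pi_le_four]

lemma heatKernel_le {t : ℝ} (ht : 0 < t) (x y : Fin m → ℤ) : heatKernel m t x y ≤ (√t)⁻¹ ^ m := by
  have norm_integrand (θ : UnitAddTorus (Fin m)) :
      ‖Complex.exp (-(2 * m) * t + t * latticeSymbol m θ) * mFourier (x - y) θ‖
        = ∏ i, Real.exp (-2 * t * (1 - (fourier 1 (θ i)).re)) := by
    have : (-(2 * m) * t + t * latticeSymbol m θ).re
        = ∑ i, -2 * t * (1 - (fourier 1 (θ i)).re) := by
      rw [latticeSymbol_apply, ← Complex.ofReal_mul, Complex.add_re, Complex.ofReal_re,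
        ← Finset.mul_sum, ← Finset.mul_sum, Finset.sum_sub_distrib]
      simp
      ring
    rw [norm_mul, norm_mFourier_apply, mul_one, Complex.norm_exp, this, Real.exp_sum]
  calc heatKernel m t x y
      ≤ ‖(heatKernel m t x y : ℂ)‖ := by simpa using le_abs_self _
    _ ≤ ∫ θ : UnitAddTorus (Fin m), ∏ i, Real.exp (-2 * t * (1 - (fourier 1 (θ i)).re)) := by
        simp_rw [heatKernel_eq_integral ht.le, ← norm_integrand]
        exact norm_integral_le_integral_norm _
    _ = (∫ θ : UnitAddCircle, Real.exp (-2 * t * (1 - (fourier 1 θ).re))) ^ m := by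
        rw [integral_fintype_prod_volume_eq_pow fun θ : UnitAddCircle =>
          Real.exp (-2 * t * (1 - (fourier 1 θ).re)), Fintype.card_fin]
    _ ≤ (√t)⁻¹ ^ m := pow_le_pow_left₀ (by positivity) (integral_exp_re_fourier_le ht) m

end HeatKernel

section CountablyValued

variable {Ω T : Type*} [MeasurableSpace Ω] [MeasurableSpace T] [MeasurableSingletonClass T]
  [Countable T] {μ : Measure Ω} {W : Ω → T} {C : Set Ω} {c : ℝ≥0∞}

lemma measure_preimage_inter_le_mul (hW : Measurable W)
    (hc : ∀ y, μ (W ⁻¹' {y} ∩ C) ≤ c * μ (W ⁻¹' {y})) (B : Set T) :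
    μ (W ⁻¹' B ∩ C) ≤ c * μ (W ⁻¹' B) := by
  have measurableSet_fiber (y : T) : MeasurableSet (W ⁻¹' {y}) := hW (measurableSet_singleton y)
  have sum_fibers (ν : Measure Ω) : ∑' y : B, ν (W ⁻¹' {(y : T)}) = ν (W ⁻¹' B) :=
    tsum_measure_preimage_singleton B.to_countable fun y _ => measurableSet_fiber y
  rw [← Measure.restrict_apply (hW B.to_countable.measurableSet), ← sum_fibers, ← sum_fibers,
    ← ENNReal.tsum_mul_left]
  refine ENNReal.tsum_le_tsum fun y => ?_
  rw [Measure.restrict_apply (measurableSet_fiber y)]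
  exact hc y

end CountablyValued

namespace IsCTSRW

variable {d : ℕ} {Ω : Type*} [MeasurableSpace Ω] {P : (Fin d → ℤ) → Measure Ω}
  {S : ℝ → Ω → Fin d → ℤ}

lemma measurable (hS : IsCTSRW d P S) (t : ℝ) : Measurable (S t) :=
  hS.meas.comp measurable_prodMk_left

lemma measure_path_inter_eq (hS : IsCTSRW d P S) (x : Fin d → ℤ) {n : ℕ} {t : Fin (n + 1) → ℝ}
    (ht₀ : 0 ≤ t 0) (ht : Monotone t) {u : ℝ} (hu : 0 ≤ u)
    (y : Fin (n + 1) → Fin d → ℤ) (w : Fin d → ℤ) :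
    P x ({ω | ∀ i, S (t i) ω = y i} ∩ {ω | S (t (Fin.last n) + u) ω = w})
      = ENNReal.ofReal (heatKernel d u (y (Fin.last n)) w) * P x {ω | ∀ i, S (t i) ω = y i} := by
  have := hS.prob x
  have path := hS.fdd x n t ht₀ (Fin.monotone_iff_le_succ.1 ht) y
  have longer_path := hS.fdd x (n + 1) (Fin.snoc (α := fun _ => ℝ) t (t (Fin.last n) + u))
    (by rwa [← Fin.castSucc_zero, Fin.snoc_castSucc])
    (fun i => by
      induction i using Fin.lastCases with
      | last =>
        simpa only [Fin.snoc_castSucc, Fin.succ_last, Fin.snoc_last, le_add_iff_nonneg_right]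
      | cast i =>
        simpa only [Fin.snoc_castSucc, Fin.succ_castSucc] using ht (Fin.castSucc_le_succ i))
    (Fin.snoc (α := fun _ => Fin d → ℤ) y w)
  rw [Fin.prod_univ_castSucc, ← Fin.castSucc_zero] at longer_path
  simp only [Fin.forall_fin_succ' (n := n + 1), Fin.snoc_castSucc, Fin.succ_castSucc, Fin.succ_last,
    Fin.snoc_last, add_sub_cancel_left, ← mul_assoc, ← path] at longer_path
  rw [← ENNReal.ofReal_toReal (measure_ne_top (P x) (_ ∩ _)),
    ← ENNReal.ofReal_toReal (measure_ne_top (P x) {ω | ∀ i, S (t i) ω = y i}),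
    ← ENNReal.ofReal_mul' ENNReal.toReal_nonneg, mul_comm, ← longer_path]
  rfl

/-- The filtration generated by the walk observed at the times `s, s + 1, s + 2, …`. -/
noncomputable def skeletonFiltration (hS : IsCTSRW d P S) (s : ℝ) :
    Filtration ℕ (inferInstance : MeasurableSpace Ω) :=
  Filtration.natural (fun k : ℕ => S (k + s)) fun _ => (hS.measurable _).stronglyMeasurable

lemma adapted_skeleton (hS : IsCTSRW d P S) (s : ℝ) :
    Adapted (hS.skeletonFiltration s) fun k : ℕ => S (k + s) :=
  (Filtration.stronglyAdapted_natural fun _ => (hS.measurable _).stronglyMeasurable).adapted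

lemma measure_inter_return_le (hS : IsCTSRW d P S) (x : Fin d → ℤ) {s u : ℝ} (hs : 0 ≤ s)
    (hu : 0 < u) {j : ℕ} {A : Set Ω} (hA : MeasurableSet[hS.skeletonFiltration s j] A) :
    P x (A ∩ {ω | S (j + s + u) ω = S (j + s) ω}) ≤ ENNReal.ofReal ((√u)⁻¹ ^ d) * P x A := by
  rw [skeletonFiltration, Filtration.natural_eq_comap] at hA
  obtain ⟨B, -, rfl⟩ := hA
  refine measure_preimage_inter_le_mul (measurable_pi_lambda _ fun _ => hS.measurable _)
    (fun y => ?_) B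
  set path : Fin (j + 1) → Fin d → ℤ := fun i => y ⟨i, i.is_le⟩
  have fiber_eq : (fun ω (i : Set.Iic j) => S ((i : ℕ) + s) ω) ⁻¹' {y}
      = {ω | ∀ i : Fin (j + 1), S ((i : ℕ) + s) ω = path i} := by
    ext ω
    simp only [mem_preimage, mem_singleton_iff, funext_iff, Subtype.forall, mem_Iic,
      mem_ofPred_eq, path, Fin.forall_iff, Nat.lt_succ_iff]
  have return_eq : {ω | ∀ i : Fin (j + 1), S ((i : ℕ) + s) ω = path i}
        ∩ {ω | S (j + s + u) ω = S (j + s) ω}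
      = {ω | ∀ i : Fin (j + 1), S ((i : ℕ) + s) ω = path i}
        ∩ {ω | S (((Fin.last j : Fin (j + 1)) : ℕ) + s + u) ω = path (Fin.last j)} := by
    ext ω
    refine and_congr_right fun h => ?_
    simp only [mem_ofPred_eq, ← h (Fin.last j), Fin.val_last]
  rw [fiber_eq, return_eq, hS.measure_path_inter_eq x (t := fun i => (i : ℕ) + s)
    (by simpa using hs) (fun i k hik => by simpa using hik) hu.le]
  gcongr
  exact heatKernel_le hu _ _

end IsCTSRW

section Range

/-- The number of ordered pairs of indices in `s`, diagonal included, at which `f` takes the same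
value. -/
def collisions {ι E : Type*} [DecidableEq E] (f : ι → E) (s : Finset ι) : ℕ :=
  ∑ a ∈ s, (s.filter fun b => f b = f a).card

lemma sq_card_le_card_image_mul_collisions {ι E : Type*} [DecidableEq E] (f : ι → E)
    (s : Finset ι) : s.card ^ 2 ≤ (s.image f).card * collisions f s := by
  calc s.card ^ 2
      = (∑ v ∈ s.image f, (s.filter fun b => f b = v).card) ^ 2 := by
        rw [← Finset.card_eq_sum_card_image]
    _ ≤ (s.image f).card * ∑ v ∈ s.image f, (s.filter fun b => f b = v).card ^ 2 :=
        sq_sum_le_card_mul_sum_sq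
    _ = (s.image f).card * collisions f s := by
        simp only [collisions, Finset.sum_comp (fun v => (s.filter fun b => f b = v).card) f,
          smul_eq_mul, sq]

variable {Ω E : Type*} {mΩ : MeasurableSpace Ω} {μ : Measure Ω} {ℱ : Filtration ℕ mΩ}
  {X : ℕ → Ω → E} {g : ℕ → ℝ≥0}

/-- Uniformly over the past, the process `X` is back at its current position after `r + 1` further
steps with conditional probability at most `g r`. -/
def HasReturnBound (μ : Measure Ω) (ℱ : Filtration ℕ mΩ) (X : ℕ → Ω → E) (g : ℕ → ℝ≥0) : Prop :=
  ∀ j r A, MeasurableSet[ℱ j] A → μ (A ∩ {ω | X (j + r + 1) ω = X j ω}) ≤ g r * μ A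

namespace HasReturnBound

lemma sum_Ico_before_le (h : HasReturnBound μ ℱ X g) {m b : ℕ} {A : Set Ω}
    (hA : MeasurableSet[ℱ m] A) :
    ∑ a ∈ Finset.Ico m b, μ (A ∩ {ω | X b ω = X a ω})
      ≤ (∑ r ∈ Finset.range (b - m), g r) * μ A := by
  rw [Finset.sum_Ico_eq_sum_range, ← Finset.sum_range_reflect, ENNReal.ofNNReal_finsetSum,
    Finset.sum_mul]
  refine Finset.sum_le_sum fun i hi => ?_
  have step : b = m + (b - m - 1 - i) + i + 1 := by grind
  have := h (m + (b - m - 1 - i)) i A (ℱ.mono (by omega) _ hA)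
  rwa [← step] at this

lemma sum_Ico_after_le (h : HasReturnBound μ ℱ X g) {m b n : ℕ} (hmb : m ≤ b) {A : Set Ω}
    (hA : MeasurableSet[ℱ m] A) :
    ∑ a ∈ Finset.Ico (b + 1) n, μ (A ∩ {ω | X b ω = X a ω})
      ≤ (∑ r ∈ Finset.range (n - (b + 1)), g r) * μ A := by
  rw [Finset.sum_Ico_eq_sum_range, ENNReal.ofNNReal_finsetSum, Finset.sum_mul]
  refine Finset.sum_le_sum fun r _ => ?_
  simpa only [eq_comm, add_right_comm] using h b r A (ℱ.mono hmb _ hA)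

lemma sum_Ico_le (h : HasReturnBound μ ℱ X g) {m b L : ℕ} (hb : b ∈ Finset.Ico m (m + L))
    {A : Set Ω} (hA : MeasurableSet[ℱ m] A) :
    ∑ a ∈ Finset.Ico m (m + L), μ (A ∩ {ω | X b ω = X a ω})
      ≤ (1 + 2 * ∑ r ∈ Finset.range L, g r : ℝ≥0) * μ A := by
  obtain ⟨hmb, hbL⟩ := Finset.mem_Ico.1 hb
  have partial_sum_le {k : ℕ} (hk : k ≤ L) :
      ∑ r ∈ Finset.range k, g r ≤ ∑ r ∈ Finset.range L, g r :=
    Finset.sum_le_sum_of_subset (Finset.range_mono hk)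
  rw [← Finset.sum_Ico_consecutive _ hmb hbL.le, Finset.sum_eq_sum_Ico_succ_bot hbL]
  calc _ ≤ (∑ r ∈ Finset.range (b - m), g r) * μ A
          + (μ A + (∑ r ∈ Finset.range (m + L - (b + 1)), g r) * μ A) := by
        gcongr
        · exact h.sum_Ico_before_le hA
        · exact inter_subset_left
        · exact h.sum_Ico_after_le hmb hA
    _ ≤ (∑ r ∈ Finset.range L, g r) * μ A + (μ A + (∑ r ∈ Finset.range L, g r) * μ A) := by
        gcongr (?_ : ℝ≥0) * μ A + (μ A + (?_ : ℝ≥0) * μ A) <;> exact partial_sum_le (by omega)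
    _ = (1 + 2 * ∑ r ∈ Finset.range L, g r : ℝ≥0) * μ A := by
        push_cast
        ring

variable [DecidableEq E] [MeasurableSpace E] [MeasurableEq E]

lemma setLIntegral_collisions_le (h : HasReturnBound μ ℱ X g) (hX : Adapted ℱ X) {m : ℕ} (L : ℕ)
    {A : Set Ω} (hA : MeasurableSet[ℱ m] A) :
    ∫⁻ ω in A, collisions (X · ω) (Finset.Ico m (m + L)) ∂μ
      ≤ (L * (1 + 2 * ∑ r ∈ Finset.range L, g r) : ℝ≥0) * μ A := by
  have measurableSet_coincide (a b : ℕ) : MeasurableSet {ω | X b ω = X a ω} :=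
    measurableSet_eq_fun hX.measurable hX.measurable
  have collisions_eq (ω : Ω) : (collisions (X · ω) (Finset.Ico m (m + L)) : ℝ≥0∞)
      = ∑ b ∈ Finset.Ico m (m + L), ∑ a ∈ Finset.Ico m (m + L),
          {ω | X b ω = X a ω}.indicator 1 ω := by
    rw [Finset.sum_comm]
    simp only [collisions, Finset.card_filter, Nat.cast_sum, Nat.cast_ite, Nat.cast_one,
      Nat.cast_zero, indicator_apply, mem_ofPred_eq, Pi.one_apply]
  simp_rw [collisions_eq]
  rw [lintegral_finsetSum _ fun b _ => Finset.measurable_sum _ fun a _ =>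
    measurable_one.indicator (measurableSet_coincide a b)]
  simp_rw [lintegral_finsetSum _ fun a _ => measurable_one.indicator (measurableSet_coincide a _),
    lintegral_indicator_one (measurableSet_coincide _ _),
    Measure.restrict_apply (measurableSet_coincide _ _), inter_comm _ A]
  calc _ ≤ ∑ _ ∈ Finset.Ico m (m + L), (1 + 2 * ∑ r ∈ Finset.range L, g r : ℝ≥0) * μ A :=
        Finset.sum_le_sum fun _ hb => h.sum_Ico_le hb hA
    _ = _ := by
        rw [Finset.sum_const, Nat.card_Ico, add_tsub_cancel_left, nsmul_eq_mul, ENNReal.coe_mul,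
          ENNReal.coe_natCast, mul_assoc]

end HasReturnBound

variable [DecidableEq E] [MeasurableSpace E] [MeasurableEq E]

lemma measurable_collisions (hX : Adapted ℱ X) {n : ℕ} {s : Finset ℕ} (hs : ∀ a ∈ s, a ≤ n) :
    Measurable[ℱ n] fun ω => collisions (X · ω) s := by
  simp only [collisions, Finset.card_filter]
  exact Finset.measurable_fun_sum _ fun a ha => Finset.measurable_fun_sum _ fun b hb =>
    Measurable.ite
      (measurableSet_eq_fun (hX.measurable_le (hs b hb)) (hX.measurable_le (hs a ha)))
      measurable_const measurable_const

/-- The event that there are at least `c` collisions during the `i`-th block of `L` steps. -/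
def manyCollisions (X : ℕ → Ω → E) (L : ℕ) (c : ℝ≥0) (i : ℕ) : Set Ω :=
  {ω | c ≤ collisions (X · ω) (Finset.Ico (i * L) (i * L + L))}

lemma measurableSet_manyCollisions (hX : Adapted ℱ X) {L : ℕ} (c : ℝ≥0) {i n : ℕ}
    (hn : i * L + L ≤ n) : MeasurableSet[ℱ n] (manyCollisions X L c i) := by
  have := measurable_collisions hX (n := n) (s := Finset.Ico (i * L) (i * L + L)) (by grind)
  exact measurableSet_le measurable_const (measurable_from_top.comp this)

namespace HasReturnBound

lemma measure_inter_manyCollisions_le (h : HasReturnBound μ ℱ X g) (hX : Adapted ℱ X) {L : ℕ}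
    (hL : L ≠ 0) {i : ℕ} {A : Set Ω} (hA : MeasurableSet[ℱ (i * L)] A) :
    μ (A ∩ manyCollisions X L (2 * (L * (1 + 2 * ∑ r ∈ Finset.range L, g r))) i)
      ≤ 2⁻¹ * μ A := by
  set D : ℝ≥0 := L * (1 + 2 * ∑ r ∈ Finset.range L, g r)
  have hD : D ≠ 0 := by positivity
  have measurable_count :
      Measurable fun ω => (collisions (X · ω) (Finset.Ico (i * L) (i * L + L)) : ℝ≥0∞) :=
    measurable_from_top.comp
      ((measurable_collisions hX (n := i * L + L) (by grind)).mono (ℱ.le _) le_rfl)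
  have markov := meas_ge_le_lintegral_div (μ := μ.restrict A) measurable_count.aemeasurable
    (ε := (2 * D : ℝ≥0)) (by positivity) ENNReal.coe_ne_top
  rw [inter_comm, ← Measure.restrict_apply
    (ℱ.le _ _ (measurableSet_manyCollisions hX _ le_rfl))]
  calc μ.restrict A (manyCollisions X L (2 * D) i)
      ≤ (D * μ A) / (2 * D : ℝ≥0) := by
        simp only [manyCollisions, ← ENNReal.coe_le_coe, ENNReal.coe_natCast]
        refine markov.trans ?_
        gcongr
        exact h.setLIntegral_collisions_le hX L hA
    _ = 2⁻¹ * μ A := by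
        rw [mul_comm 2 D, ENNReal.coe_mul D, ENNReal.mul_div_mul_left _ _ (by exact_mod_cast hD)
          ENNReal.coe_ne_top, ENNReal.div_eq_inv_mul, ENNReal.coe_ofNat]

lemma measure_forall_manyCollisions_le (h : HasReturnBound μ ℱ X g) (hX : Adapted ℱ X) {L : ℕ}
    (hL : L ≠ 0) (K : ℕ) :
    μ (⋂ i < K, manyCollisions X L (2 * (L * (1 + 2 * ∑ r ∈ Finset.range L, g r))) i)
      ≤ 2⁻¹ ^ K * μ univ := by
  induction K with
  | zero => simp
  | succ K ih =>
    rw [biInter_lt_succ, pow_succ', mul_assoc]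
    refine (h.measure_inter_manyCollisions_le hX hL ?_).trans (by gcongr)
    refine MeasurableSet.biInter (to_countable _) fun i hi =>
      measurableSet_manyCollisions hX _ ?_
    rw [← Nat.succ_mul]
    exact Nat.mul_le_mul_right L hi

/-- By the Cauchy–Schwarz inequality, a small range forces many collisions in every block. -/
lemma measure_card_range_lt_le (h : HasReturnBound μ ℱ X g) (hX : Adapted ℱ X) {L : ℕ}
    (hL : L ≠ 0) {K n : ℕ} (hn : K * L ≤ n) :
    μ {ω | ((Finset.range n).image (X · ω)).card * (2 * (1 + 2 * ∑ r ∈ Finset.range L, g r)) < L}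
      ≤ 2⁻¹ ^ K * μ univ := by
  refine (measure_mono fun ω hω => mem_iInter₂.2 fun i hi => ?_).trans
    (h.measure_forall_manyCollisions_le hX hL K)
  set R := (Finset.range n).image (X · ω)
  set s := Finset.Ico (i * L) (i * L + L)
  have block_subset : s.image (X · ω) ⊆ R := by
    refine Finset.image_subset_image fun a ha => ?_
    have : (i + 1) * L ≤ n := (Nat.mul_le_mul_right L hi).trans hn
    grind
  set c : ℝ≥0 := 1 + 2 * ∑ r ∈ Finset.range L, g r
  have cauchy_schwarz : (L : ℝ≥0) ^ 2 ≤ R.card * collisions (X · ω) s := by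
    have := (sq_card_le_card_image_mul_collisions (X · ω) s).trans
      (Nat.mul_le_mul_right _ (Finset.card_le_card block_subset))
    rw [Nat.card_Ico, add_tsub_cancel_left] at this
    exact_mod_cast this
  by_contra few_collisions
  refine lt_irrefl ((L : ℝ≥0) ^ 2) ?_
  calc (L : ℝ≥0) ^ 2
      ≤ R.card * collisions (X · ω) s := cauchy_schwarz
    _ ≤ R.card * (2 * (L * c)) := by gcongr; exact (not_le.1 few_collisions).le
    _ = R.card * (2 * c) * L := by ring
    _ < L * L := by gcongr; exact hω
    _ = (L : ℝ≥0) ^ 2 := (sq _).symm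

end HasReturnBound

end Range

lemma isLittleO_const_add_log_rpow (a b : ℝ) {κ : ℝ} (hκ : 0 < κ) :
    (fun y => a + b * Real.log y) =o[atTop] fun y : ℝ => y ^ κ :=
  (Asymptotics.isLittleO_const_left.2 (.inr (tendsto_norm_atTop_atTop.comp
    (tendsto_rpow_atTop hκ)))).add ((isLittleO_log_rpow_atTop hκ).const_mul_left b)

lemma floor_rpow_mul_floor_rpow_one_sub_le {n : ℕ} (hn : n ≠ 0) (κ : ℝ) :
    ⌊(n : ℝ) ^ κ⌋₊ * ⌊(n : ℝ) ^ (1 - κ)⌋₊ ≤ n := by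
  have : (⌊(n : ℝ) ^ κ⌋₊ * ⌊(n : ℝ) ^ (1 - κ)⌋₊ : ℝ) ≤ (n : ℝ) ^ κ * (n : ℝ) ^ (1 - κ) := by
    gcongr <;> exact Nat.floor_le (by positivity)
  rw [← Real.rpow_add (by positivity), add_sub_cancel, Real.rpow_one] at this
  exact_mod_cast this

lemma inv_two_pow_eq_ofReal_exp (K : ℕ) :
    (2⁻¹ : ℝ≥0∞) ^ K = ENNReal.ofReal (Real.exp (-(K * Real.log 2))) := by
  rw [← Real.log_pow, Real.exp_neg, Real.exp_log (by positivity),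
    ENNReal.ofReal_inv_of_pos (by positivity), ENNReal.ofReal_pow zero_le_two, ENNReal.ofReal_ofNat,
    ENNReal.inv_pow]

namespace IsCTSRW

variable {d : ℕ} {Ω : Type*} [MeasurableSpace Ω] {P : (Fin d → ℤ) → Measure Ω}
  {S : ℝ → Ω → Fin d → ℤ}

lemma hasReturnBound_skeleton (hS : IsCTSRW d P S) (hd : 2 ≤ d) (x : Fin d → ℤ) {s : ℝ}
    (hs : 0 ≤ s) :
    HasReturnBound (P x) (hS.skeletonFiltration s) (fun k : ℕ => S (k + s))
      fun r => ((r : ℝ≥0) + 1)⁻¹ := by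
  intro j r A hA
  have rate_le : (√(r + 1 : ℝ))⁻¹ ^ d ≤ ((r + 1 : ℝ≥0)⁻¹ : ℝ≥0) := by
    calc (√(r + 1 : ℝ))⁻¹ ^ d
        ≤ (√(r + 1 : ℝ))⁻¹ ^ 2 :=
          pow_le_pow_of_le_one (by positivity) (inv_le_one_of_one_le₀ (by simp)) hd
      _ = ((r + 1 : ℝ≥0)⁻¹ : ℝ≥0) := by
          rw [inv_pow, Real.sq_sqrt (by positivity)]
          push_cast
          rfl
  have time_eq : ((j + r + 1 : ℕ) : ℝ) + s = j + s + (r + 1) := by push_cast; ring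
  simp only [time_eq]
  refine (hS.measure_inter_return_le x hs (by positivity) hA).trans ?_
  gcongr
  exact ENNReal.ofReal_le_of_le_toReal rate_le

lemma measure_card_range_mul_log_lt_le (hS : IsCTSRW d P S) (hd : 2 ≤ d) (x : Fin d → ℤ) {s : ℝ}
    (hs : 0 ≤ s) {K L n : ℕ} (hL : L ≠ 0) (hn : K * L ≤ n) :
    P x {ω | ((Finset.range n).image fun k : ℕ => S (k + s) ω).card * (6 + 4 * Real.log L) < L}
      ≤ 2⁻¹ ^ K := by
  have := hS.prob x
  have sum_inv_le : ((∑ r ∈ Finset.range L, ((r : ℝ≥0) + 1)⁻¹ : ℝ≥0) : ℝ) ≤ 1 + Real.log L := by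
    simpa [harmonic] using harmonic_le_one_add_log L
  refine (measure_mono fun ω hω => ?_).trans <|
    ((hS.hasReturnBound_skeleton hd x hs).measure_card_range_lt_le (hS.adapted_skeleton s) hL
      hn).trans_eq (by rw [measure_univ, mul_one])
  rw [mem_ofPred_eq, ← NNReal.coe_lt_coe]
  refine lt_of_le_of_lt ?_ hω
  push_cast at sum_inv_le ⊢
  gcongr
  linarith

lemma eventually_measure_card_range_lt_le (hS : IsCTSRW d P S) (hd : 2 ≤ d) (x : Fin d → ℤ) {κ : ℝ}
    (hκ₀ : 0 < κ) (hκ₁ : κ < 1) :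
    ∀ᶠ n : ℕ in atTop, ∀ s, 0 ≤ s →
      P x {ω | ((Finset.range n).image fun k : ℕ => S (k + s) ω).card < (n : ℝ) ^ (1 - 2 * κ)}
        ≤ ENNReal.ofReal (Real.exp (-(n : ℝ) ^ κ / 4)) := by
  have log_small : ∀ᶠ n : ℕ in atTop, ‖12 + 8 * Real.log n‖ ≤ 1 * ‖(n : ℝ) ^ κ‖ :=
    tendsto_natCast_atTop_atTop.eventually
      ((isLittleO_const_add_log_rpow 12 8 hκ₀).bound one_pos)
  filter_upwards [log_small, eventually_ge_atTop 1] with n log_le hn s hs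
  have one_le_n : (1 : ℝ) ≤ n := by exact_mod_cast hn
  rw [one_mul, Real.norm_of_nonneg (r := (n : ℝ) ^ κ) (by positivity)] at log_le
  set K := ⌊(n : ℝ) ^ κ⌋₊
  set L := ⌊(n : ℝ) ^ (1 - κ)⌋₊
  have half_le_K : (n : ℝ) ^ κ / 2 ≤ K :=
    (Nat.div_two_lt_floor (Real.one_le_rpow one_le_n hκ₀.le)).le
  have half_le_L : (n : ℝ) ^ (1 - κ) / 2 ≤ L :=
    (Nat.div_two_lt_floor (Real.one_le_rpow one_le_n (by linarith))).le
  have L_pos : (0 : ℝ) < L := half_le_L.trans_lt' (by positivity)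
  have L_le : (L : ℝ) ≤ n :=
    (Nat.floor_le (by positivity)).trans (Real.rpow_le_self_of_one_le one_le_n (by linarith))
  refine (measure_mono fun ω hω => ?_).trans
    ((hS.measure_card_range_mul_log_lt_le hd x hs (by exact_mod_cast L_pos.ne')
      (floor_rpow_mul_floor_rpow_one_sub_le (by positivity) κ)).trans ?_)
  · rw [mem_ofPred_eq] at hω ⊢
    calc _ < (n : ℝ) ^ (1 - 2 * κ) * (6 + 4 * Real.log L) := by
          gcongr
      _ ≤ (n : ℝ) ^ (1 - 2 * κ) * ((n : ℝ) ^ κ / 2) := by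
          gcongr
          linarith [Real.le_norm_self (12 + 8 * Real.log n), Real.log_le_log L_pos L_le]
      _ = (n : ℝ) ^ (1 - κ) / 2 := by
          rw [mul_div_assoc', ← Real.rpow_add (by positivity)]
          ring_nf
      _ ≤ L := half_le_L
  · rw [inv_two_pow_eq_ofReal_exp]
    gcongr
    nlinarith [Real.log_two_gt_d9]

end IsCTSRW

section RandomSet

/-- The random set `𝓗` contains each point with probability at least `p`, independently of the
other points. -/
structure IsIndepRandomSet {Ω E : Type*} [MeasurableSpace Ω] (μ : Measure Ω) (𝓗 : Ω → Set E)
    (p : ℝ) : Prop where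
  measurableSet_mem : ∀ x, MeasurableSet {ζ | x ∈ 𝓗 ζ}
  iIndepSet_mem : iIndepSet (fun x => {ζ | x ∈ 𝓗 ζ}) μ
  le_measureReal_mem : ∀ x, p ≤ μ.real {ζ | x ∈ 𝓗 ζ}

/-- The number of visits of the path `f` to the set `B` during its first `n` steps. -/
noncomputable def visits {E : Type*} (B : Set E) (n : ℕ) (f : ℕ → E) : ℝ :=
  ∑ k ∈ Finset.range n, B.indicator 1 (f k)

lemma visits_nonneg {E : Type*} (B : Set E) (n : ℕ) (f : ℕ → E) : 0 ≤ visits B n f :=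
  Finset.sum_nonneg fun _ _ => indicator_nonneg (fun _ _ => zero_le_one) _

lemma lintegral_exp_neg_indicator_le {Ω : Type*} [MeasurableSpace Ω] {μ : Measure Ω}
    [IsProbabilityMeasure μ] {A : Set Ω} (hA : MeasurableSet A) :
    ∫⁻ ω, ENNReal.ofReal (Real.exp (-A.indicator 1 ω)) ∂μ
      ≤ ENNReal.ofReal (Real.exp (-(μ.real A / 2))) := by
  have exp_eq (ω : Ω) :
      Real.exp (-A.indicator 1 ω) = 1 - (1 - Real.exp (-1)) * A.indicator 1 ω := by
    by_cases h : ω ∈ A <;> simp [h]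
  have integrable_indicator : Integrable (A.indicator (1 : Ω → ℝ)) μ :=
    (integrable_const 1).indicator hA
  rw [← ofReal_integral_eq_lintegral_ofReal
    (by simp_rw [exp_eq]; exact (integrable_const _).sub (integrable_indicator.const_mul _))
    (ae_of_all _ fun _ => (Real.exp_pos _).le)]
  refine ENNReal.ofReal_le_ofReal ?_
  calc ∫ ω, Real.exp (-A.indicator 1 ω) ∂μ
      = 1 - (1 - Real.exp (-1)) * μ.real A := by
        simp_rw [exp_eq]
        rw [integral_sub (integrable_const _) (integrable_indicator.const_mul _),
          integral_const_mul, integral_indicator_one hA, integral_const, probReal_univ, one_smul]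
    _ ≤ 1 - μ.real A / 2 := by
        nlinarith [Real.exp_neg_one_lt_d9, measureReal_nonneg (μ := μ) (s := A)]
    _ ≤ Real.exp (-(μ.real A / 2)) := Real.one_sub_le_exp_neg _

namespace IsIndepRandomSet

variable {Ω E : Type*} [MeasurableSpace Ω] {μ : Measure Ω} {𝓗 : Ω → Set E} {p : ℝ}

lemma lintegral_exp_neg_sum_indicator_le (h : IsIndepRandomSet μ 𝓗 p) (R : Finset E) :
    ∫⁻ ζ, ENNReal.ofReal (Real.exp (-∑ x ∈ R, (𝓗 ζ).indicator 1 x)) ∂μ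
      ≤ ENNReal.ofReal (Real.exp (-(p / 2 * R.card))) := by
  have := h.iIndepSet_mem.isProbabilityMeasure
  have exp_indep := h.iIndepSet_mem.iIndepFun_indicator.comp
    (fun _ (r : ℝ) => ENNReal.ofReal (Real.exp (-r))) (by fun_prop)
  have measurable_exp (x : E) :
      Measurable fun ζ => ENNReal.ofReal (Real.exp (-{ζ | x ∈ 𝓗 ζ}.indicator 1 ζ)) := by
    have := measurable_one (α := ℝ).indicator (h.measurableSet_mem x)
    fun_prop
  calc ∫⁻ ζ, ENNReal.ofReal (Real.exp (-∑ x ∈ R, (𝓗 ζ).indicator 1 x)) ∂μ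
      = ∫⁻ ζ, ∏ x ∈ R, ENNReal.ofReal (Real.exp (-{ζ | x ∈ 𝓗 ζ}.indicator 1 ζ)) ∂μ := by
        simp_rw [← Finset.sum_neg_distrib, Real.exp_sum,
          ENNReal.ofReal_prod_of_nonneg fun _ _ => (Real.exp_pos _).le]
        rfl
    _ = ∏ x ∈ R, ∫⁻ ζ, ENNReal.ofReal (Real.exp (-{ζ | x ∈ 𝓗 ζ}.indicator 1 ζ)) ∂μ :=
        lintegral_prod_eq_prod_lintegral_of_indepFun R _ exp_indep measurable_exp
    _ ≤ ∏ x ∈ R, ENNReal.ofReal (Real.exp (-(p / 2))) := by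
        refine Finset.prod_le_prod' fun x _ =>
          (lintegral_exp_neg_indicator_le (h.measurableSet_mem x)).trans ?_
        gcongr
        exact h.le_measureReal_mem x
    _ = ENNReal.ofReal (Real.exp (-(p / 2 * R.card))) := by
        rw [Finset.prod_const, ← ENNReal.ofReal_pow (Real.exp_pos _).le, ← Real.exp_nat_mul]
        ring_nf

lemma lintegral_exp_neg_visits_le [DecidableEq E] (h : IsIndepRandomSet μ 𝓗 p) (n : ℕ)
    (f : ℕ → E) :
    ∫⁻ ζ, ENNReal.ofReal (Real.exp (-visits (𝓗 ζ) n f)) ∂μ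
      ≤ ENNReal.ofReal (Real.exp (-(p / 2 * ((Finset.range n).image f).card))) := by
  refine (lintegral_mono fun ζ => ?_).trans (h.lintegral_exp_neg_sum_indicator_le _)
  gcongr
  exact Finset.sum_image_le_of_nonneg (f := (𝓗 ζ).indicator 1) fun _ _ =>
    indicator_nonneg (fun _ _ => zero_le_one) _

lemma lintegral_lintegral_exp_neg_visits_le [DecidableEq E] (h : IsIndepRandomSet μ 𝓗 p)
    (hp : 0 ≤ p) {Ω' : Type*} [MeasurableSpace Ω'] (ν : Measure Ω') [IsProbabilityMeasure ν]
    (X : ℕ → Ω' → E) (n : ℕ) (r : ℝ) :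
    ∫⁻ ω, ∫⁻ ζ, ENNReal.ofReal (Real.exp (-visits (𝓗 ζ) n (X · ω))) ∂μ ∂ν
      ≤ ENNReal.ofReal (Real.exp (-(p / 2 * r)))
        + ν {ω | ((Finset.range n).image (X · ω)).card < r} := by
  set small : Set Ω' := {ω | ((Finset.range n).image (X · ω)).card < r}
  calc _ ≤ ∫⁻ ω, (ENNReal.ofReal (Real.exp (-(p / 2 * r))) + small.indicator 1 ω) ∂ν := by
        refine lintegral_mono fun ω => (h.lintegral_exp_neg_visits_le n (X · ω)).trans ?_
        by_cases hω : ω ∈ small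
        · rw [indicator_of_mem hω]
          refine le_add_of_nonneg_of_le zero_le (ENNReal.ofReal_le_one.2 ?_)
          exact Real.exp_le_one_iff.2 (by simpa using by positivity)
        · rw [indicator_of_notMem hω, add_zero]
          gcongr
          exact not_lt.1 hω
    _ = ENNReal.ofReal (Real.exp (-(p / 2 * r))) + ∫⁻ ω, small.indicator 1 ω ∂ν := by
        rw [lintegral_add_left measurable_const, lintegral_const, measure_univ, mul_one]
    _ ≤ ENNReal.ofReal (Real.exp (-(p / 2 * r))) + ν small := by
        gcongr
        exact lintegral_indicator_one_le small

end IsIndepRandomSet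

end RandomSet

section Occupation

lemma setIntegral_sum_range_natCast_add {g : ℝ → ℝ} {n : ℕ} (hg : IntegrableOn g (Ioc 0 n)) :
    ∫ s in Ioc (0 : ℝ) 1, ∑ k ∈ Finset.range n, g (k + s) = ∫ u in Ioc (0 : ℝ) n, g u := by
  have integrable_piece {k : ℕ} (hk : k < n) : IntervalIntegrable g volume k (k + 1 : ℕ) := by
    rw [intervalIntegrable_iff_integrableOn_Ioc_of_le (by simp)]
    exact hg.mono_set (Ioc_subset_Ioc k.cast_nonneg (by exact_mod_cast hk))
  rw [← intervalIntegral.integral_of_le zero_le_one,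
    ← intervalIntegral.integral_of_le n.cast_nonneg, intervalIntegral.integral_finsetSum,
    ← Nat.cast_zero, ← intervalIntegral.sum_integral_adjacent_intervals fun k => integrable_piece]
  · refine Finset.sum_congr rfl fun k _ => ?_
    rw [intervalIntegral.integral_comp_add_left]
    push_cast
    rw [add_zero]
  · intro k hk
    have := (integrable_piece (Finset.mem_range.1 hk)).comp_add_left (k : ℝ)
    simpa using this

variable {E : Type*} [MeasurableSpace E]

lemma integrableOn_indicator_comp {B : Set E} (hB : MeasurableSet B) {f : ℝ → E}
    (hf : Measurable f) {s : Set ℝ} (hs : volume s ≠ ∞) :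
    IntegrableOn (fun u => B.indicator (fun _ => (1 : ℝ)) (f u)) s :=
  (integrableOn_const (C := (1 : ℝ)) hs).indicator (hf hB)

lemma exp_neg_occupation_le_lintegral {B : Set E} (hB : MeasurableSet B) {f : ℝ → E}
    (hf : Measurable f) (n : ℕ) :
    ENNReal.ofReal (Real.exp (-∫ u in Ioc (0 : ℝ) n, B.indicator (fun _ => (1 : ℝ)) (f u)))
      ≤ ∫⁻ s in Ioc (0 : ℝ) 1, ENNReal.ofReal (Real.exp (-visits B n fun k => f (k + s))) := by
  have visits_integrable : IntegrableOn (fun s : ℝ => visits B n fun k => f (k + s)) (Ioc 0 1) :=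
    integrable_finsetSum _ fun k _ =>
      integrableOn_indicator_comp hB (hf.comp (measurable_const_add (k : ℝ))) (by simp)
  have exp_integrable : IntegrableOn (fun s : ℝ => Real.exp (-visits B n fun k => f (k + s)))
      (Ioc 0 1) := by
    refine Integrable.of_bound (C := 1) (Real.continuous_exp.comp_aestronglyMeasurable
      visits_integrable.neg.aestronglyMeasurable) (ae_of_all _ fun s => ?_)
    rw [Real.norm_of_nonneg (Real.exp_pos _).le, Real.exp_le_one_iff]
    exact neg_nonpos.2 (visits_nonneg _ _ _)
  have : IsProbabilityMeasure (volume.restrict (Ioc (0 : ℝ) 1)) := ⟨by simp⟩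
  rw [← setIntegral_sum_range_natCast_add (integrableOn_indicator_comp hB hf (by simp)),
    ← integral_neg, ← ofReal_integral_eq_lintegral_ofReal exp_integrable
    (ae_of_all _ fun _ => (Real.exp_pos _).le)]
  exact ENNReal.ofReal_le_ofReal <| convexOn_exp.map_integral_le Real.continuous_exp.continuousOn
    isClosed_univ (by simp) visits_integrable.neg exp_integrable

variable {Ω Ω' : Type*} [MeasurableSpace Ω] [MeasurableSpace Ω']

lemma measurable_indicator_prod [DiscreteMeasurableSpace E] [Countable E] {𝓗 : Ω → Set E}
    (h𝓗 : ∀ x, MeasurableSet {ζ | x ∈ 𝓗 ζ}) :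
    Measurable fun q : Ω × E => (𝓗 q.1).indicator (fun _ => (1 : ℝ)) q.2 :=
  measurable_from_prod_countable_left fun x => measurable_const.indicator (h𝓗 x)

lemma measurable_visits_prod [DiscreteMeasurableSpace E] [Countable E] {𝓗 : Ω → Set E}
    (h𝓗 : ∀ x, MeasurableSet {ζ | x ∈ 𝓗 ζ}) {X : ℕ → Ω' → E} (hX : ∀ k, Measurable (X k))
    (n : ℕ) : Measurable fun q : Ω × Ω' => visits (𝓗 q.1) n (X · q.2) :=
  Finset.measurable_fun_sum _ fun k _ => (measurable_indicator_prod h𝓗).comp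
    (measurable_fst.prodMk ((hX k).comp measurable_snd))

variable {d : ℕ} {S : ℝ → Ω' → Fin d → ℤ} {𝓗 : Ω → Set (Fin d → ℤ)}

lemma measurable_occTime_prod (h𝓗 : ∀ x, MeasurableSet {ζ | x ∈ 𝓗 ζ})
    (hS : Measurable fun q : ℝ × Ω' => S q.1 q.2) (t : ℝ) :
    Measurable fun q : Ω × Ω' => occTime d S (𝓗 q.1) t q.2 := by
  have integrand_measurable : Measurable fun q : (Ω × Ω') × ℝ =>
      (𝓗 q.1.1).indicator (fun _ => (1 : ℝ)) (S q.2 q.1.2) :=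
    (measurable_indicator_prod h𝓗).comp
      ((measurable_fst.comp measurable_fst).prodMk
        (hS.comp (measurable_snd.prodMk (measurable_snd.comp measurable_fst))))
  exact integrand_measurable.stronglyMeasurable.integral_prod_right.measurable

lemma measure_occTime_le_one_le (ν : Measure Ω') (B : Set (Fin d → ℤ))
    (hS : Measurable fun q : ℝ × Ω' => S q.1 q.2) (t : ℝ) :
    ν {ω | occTime d S B t ω ≤ 1}
      ≤ ENNReal.ofReal (Real.exp 1) * ∫⁻ ω, ENNReal.ofReal (Real.exp (-occTime d S B t ω)) ∂ν := by
  have occTime_measurable : Measurable (occTime d S B t) :=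
    (measurable_occTime_prod (Ω := Unit) (𝓗 := fun _ => B) (by simp) hS t).comp
      (measurable_const (a := ()) |>.prodMk measurable_id)
  have scaled_measurable : Measurable fun ω => ENNReal.ofReal (Real.exp 1)
      * ENNReal.ofReal (Real.exp (-occTime d S B t ω)) := by fun_prop
  rw [← lintegral_const_mul' _ _ ENNReal.ofReal_ne_top]
  calc ν {ω | occTime d S B t ω ≤ 1}
      ≤ ν {ω | 1 ≤ ENNReal.ofReal (Real.exp 1)
          * ENNReal.ofReal (Real.exp (-occTime d S B t ω))} := by
        refine measure_mono fun ω hω => ?_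
        rw [mem_ofPred_eq, ← ENNReal.ofReal_mul (Real.exp_pos _).le, ← Real.exp_add,
          ENNReal.one_le_ofReal, Real.one_le_exp_iff]
        linarith [mem_ofPred_eq ▸ hω]
    _ ≤ _ := by simpa using mul_meas_ge_le_lintegral scaled_measurable 1

lemma IsIndepRandomSet.lintegral_exp_neg_occTime_le {μ : Measure Ω} {p : ℝ}
    (h : IsIndepRandomSet μ 𝓗 p) (hp : 0 ≤ p) {ν : Measure Ω'} [IsProbabilityMeasure ν]
    (hS : Measurable fun q : ℝ × Ω' => S q.1 q.2) (n : ℕ) {r : ℝ} {δ : ℝ≥0∞}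
    (hδ : ∀ s, 0 ≤ s →
      ν {ω | ((Finset.range n).image fun k : ℕ => S (k + s) ω).card < r} ≤ δ) :
    ∫⁻ ζ, ∫⁻ ω, ENNReal.ofReal (Real.exp (-occTime d S (𝓗 ζ) n ω)) ∂ν ∂μ
      ≤ ENNReal.ofReal (Real.exp (-(p / 2 * r))) + δ := by
  have := h.iIndepSet_mem.isProbabilityMeasure
  set F : Ω → ℝ × Ω' → ℝ≥0∞ := fun ζ q =>
    ENNReal.ofReal (Real.exp (-visits (𝓗 ζ) n fun k => S (k + q.1) q.2))
  have F_measurable : Measurable (Function.uncurry F) := by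
    have := measurable_visits_prod h.measurableSet_mem (X := fun k (q : ℝ × Ω') => S (k + q.1) q.2)
      (fun k => hS.comp ((measurable_fst.const_add _).prodMk measurable_snd)) n
    exact (Real.measurable_exp.comp this.neg).ennreal_ofReal
  calc ∫⁻ ζ, ∫⁻ ω, ENNReal.ofReal (Real.exp (-occTime d S (𝓗 ζ) n ω)) ∂ν ∂μ
      ≤ ∫⁻ ζ, ∫⁻ ω, (∫⁻ s in Ioc (0 : ℝ) 1, F ζ (s, ω)) ∂ν ∂μ :=
        lintegral_mono fun ζ => lintegral_mono fun ω =>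
          exp_neg_occupation_le_lintegral (DiscreteMeasurableSpace.forall_measurableSet _)
            (hS.comp measurable_prodMk_right) n
    _ = ∫⁻ s in Ioc (0 : ℝ) 1, ∫⁻ ω, ∫⁻ ζ, F ζ (s, ω) ∂μ ∂ν := by
        have tonelli (ζ : Ω) := lintegral_prod_symm' (μ := volume.restrict (Ioc (0 : ℝ) 1)) (ν := ν)
          (F ζ) (F_measurable.comp measurable_prodMk_left)
        simp_rw [← tonelli]
        rw [lintegral_lintegral_swap F_measurable.aemeasurable]
        exact lintegral_prod _ F_measurable.lintegral_prod_left'.aemeasurable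
    _ ≤ ∫⁻ _ in Ioc (0 : ℝ) 1, (ENNReal.ofReal (Real.exp (-(p / 2 * r))) + δ) :=
        setLIntegral_mono' measurableSet_Ioc fun s hs =>
          (h.lintegral_lintegral_exp_neg_visits_le hp ν (fun k ω => S (k + s) ω) n r).trans
            (by gcongr; exact hδ s hs.1.le)
    _ = ENNReal.ofReal (Real.exp (-(p / 2 * r))) + δ := by simp

end Occupation

section Asymptotics

lemma eventually_const_mul_rpow_le (C : ℝ) {a b : ℝ} (h : b < a) :
    ∀ᶠ t : ℝ in atTop, C * t ^ b ≤ t ^ a := by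
  filter_upwards [(tendsto_rpow_atTop (sub_pos.2 h)).eventually_ge_atTop C, eventually_gt_atTop 0]
    with t ht t_pos
  calc C * t ^ b ≤ t ^ (a - b) * t ^ b := by gcongr
    _ = t ^ a := by rw [← Real.rpow_add t_pos, sub_add_cancel]

lemma eventually_rpow_le_floor_rpow {a b : ℝ} (ha : 0 ≤ a) (h : b < a) :
    ∀ᶠ t : ℝ in atTop, t ^ b ≤ (⌊t⌋₊ : ℝ) ^ a := by
  filter_upwards [eventually_const_mul_rpow_le (2 ^ a) h, eventually_ge_atTop 1] with t ht one_le_t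
  calc t ^ b ≤ t ^ a / 2 ^ a := by rwa [le_div_iff₀' (by positivity)]
    _ = (t / 2) ^ a := (Real.div_rpow (by positivity) zero_le_two a).symm
    _ ≤ (⌊t⌋₊ : ℝ) ^ a := by
        gcongr
        exact (Nat.div_two_lt_floor one_le_t).le

lemma eventually_mul_exp_neg_mul_rpow_le (A : ℝ) {b c κ : ℝ} (hb : 0 < b) (hc : 0 ≤ c) (h : c < κ) :
    ∀ᶠ t : ℝ in atTop, A * Real.exp (-(b * t ^ κ)) ≤ Real.exp (-t ^ c) := by
  filter_upwards [eventually_const_mul_rpow_le ((1 + |A|) / b) h, eventually_ge_atTop 1]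
    with t ht one_le_t
  have exponent_le : |A| + t ^ c ≤ b * t ^ κ := by
    calc |A| + t ^ c ≤ (1 + |A|) * t ^ c := by
          nlinarith [Real.one_le_rpow one_le_t hc, abs_nonneg A]
      _ ≤ b * t ^ κ := by rwa [div_mul_eq_mul_div, div_le_iff₀' hb] at ht
  calc A * Real.exp (-(b * t ^ κ)) ≤ Real.exp |A| * Real.exp (-(b * t ^ κ)) := by
        gcongr
        linarith [le_abs_self A, Real.add_one_le_exp |A|]
    _ ≤ Real.exp (-t ^ c) := by
        rw [← Real.exp_add]
        gcongr
        linarith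

lemma summable_exp_neg_rpow {c : ℝ} (hc : 0 < c) :
    Summable fun n : ℕ => Real.exp (-(n : ℝ) ^ c) := by
  have compare := (isLittleO_exp_neg_mul_rpow_atTop one_pos (-2 / c)).comp_tendsto
    ((tendsto_rpow_atTop hc).comp tendsto_natCast_atTop_atTop)
  refine summable_of_isBigO_nat (Real.summable_nat_rpow.2 (by norm_num : (-2 : ℝ) < -1))
    (compare.isBigO.congr (fun n => ?_) fun n => ?_)
  · simp
  · simp [← Real.rpow_mul n.cast_nonneg, mul_div_cancel₀ _ hc.ne']

variable {Ω : Type*} [MeasurableSpace Ω] {μ : Measure Ω}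

lemma ae_eventually_lt_of_lintegral_le [IsFiniteMeasure μ] {f : ℕ → Ω → ℝ≥0∞}
    (hf : ∀ n, AEMeasurable (f n) μ) {b c : ℕ → ℝ} (hc : ∀ n, 0 < c n) (hb : Summable b)
    (h : ∀ᶠ n in atTop, ∫⁻ ω, f n ω ∂μ ≤ ENNReal.ofReal (c n * b n)) :
    ∀ᵐ ω ∂μ, ∀ᶠ n in atTop, f n ω < ENNReal.ofReal (c n) := by
  have markov : ∀ᶠ n in atTop, μ {ω | ENNReal.ofReal (c n) ≤ f n ω} ≤ ENNReal.ofReal (b n) := by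
    filter_upwards [h] with n hn
    refine (meas_ge_le_lintegral_div (hf n) (by simpa using hc n) ENNReal.ofReal_ne_top).trans ?_
    rw [ENNReal.ofReal_mul (hc n).le] at hn
    exact ENNReal.div_le_of_le_mul' hn
  have summable_measure : Summable fun n => μ.real {ω | ENNReal.ofReal (c n) ≤ f n ω} := by
    refine hb.abs.of_norm_bounded_eventually_nat (markov.mono fun n hn => ?_)
    rw [Real.norm_of_nonneg measureReal_nonneg]
    exact ENNReal.toReal_le_of_le_ofReal (abs_nonneg _)
      (hn.trans (ENNReal.ofReal_le_ofReal (le_abs_self _)))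
  have := ae_eventually_notMem (μ := μ) (by simpa using summable_measure.tsum_ofReal_ne_top)
  simpa using this

lemma ae_eventually_lt_exp_neg_rpow [IsFiniteMeasure μ] {f : ℕ → Ω → ℝ≥0∞}
    (hf : ∀ n, AEMeasurable (f n) μ) {c κ : ℝ} (hc : 0 < c) (hκ : c < κ)
    (h : ∀ᶠ n : ℕ in atTop, ∫⁻ ω, f n ω ∂μ ≤ ENNReal.ofReal (Real.exp (-(n : ℝ) ^ κ))) :
    ∀ᵐ ω ∂μ, ∀ᶠ n : ℕ in atTop, f n ω < ENNReal.ofReal (Real.exp (-(n : ℝ) ^ c)) := by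
  refine ae_eventually_lt_of_lintegral_le hf (fun _ => Real.exp_pos _) (summable_exp_neg_rpow hc) ?_
  filter_upwards [h, tendsto_natCast_atTop_atTop.eventually
    (eventually_const_mul_rpow_le 2 hκ)] with n hn exponent_le
  refine hn.trans (ENNReal.ofReal_le_ofReal ?_)
  rw [← Real.exp_add]
  gcongr
  linarith

end Asymptotics

namespace IsScenery

variable {d : ℕ} {α : ℝ} {Ω : Type*} [MeasurableSpace Ω] {μ : Measure Ω} {z : (Fin d → ℤ) → Ω → ℝ}

lemma isIndepRandomSet (hz : IsScenery d α μ z) (r : ℝ) :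
    IsIndepRandomSet μ (fun ζ => {y | r ≤ z y ζ}) (μ.real {ζ | r ≤ z 0 ζ}) where
  measurableSet_mem x := hz.meas x measurableSet_Ici
  iIndepSet_mem := (iIndepSet_iff_meas_biInter fun x => hz.meas x measurableSet_Ici).2 fun s =>
    hz.indep.measure_inter_preimage_eq_mul s fun _ _ => measurableSet_Ici
  le_measureReal_mem x := (congrArg ENNReal.toReal
    ((hz.ident x).measure_mem_eq measurableSet_Ici)).ge

lemma eventually_rpow_neg_le_measureReal (hz : IsScenery d α μ z) (hα : 0 < α) {β : ℝ}
    (hβ : α < β) : ∀ᶠ r : ℝ in atTop, r ^ (-β) ≤ μ.real {ζ | r ≤ z 0 ζ} := by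
  have := hz.prob
  -- A vanishing probability would give the ratio `log 0 / log r = 0`, outside the interval.
  have ratio_mem := hz.tail.eventually (Ioo_mem_nhds (neg_lt_neg hβ) (neg_lt_zero.2 hα))
  filter_upwards [ratio_mem, eventually_gt_atTop 1] with r ⟨neg_β_lt, ratio_neg⟩ one_lt_r
  have prob_pos : 0 < μ.real {ζ | r < z 0 ζ} := by
    refine measureReal_nonneg.lt_of_ne fun h => ?_
    simp [← measureReal_def, ← h] at ratio_neg
  calc r ^ (-β) ≤ μ.real {ζ | r < z 0 ζ} := by
        rw [lt_div_iff₀ (Real.log_pos one_lt_r)] at neg_β_lt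
        rw [Real.rpow_def_of_pos (by positivity), ← Real.le_log_iff_exp_le prob_pos, mul_comm]
        exact neg_β_lt.le
    _ ≤ μ.real {ζ | r ≤ z 0 ζ} := measureReal_mono fun ζ (h : r < z 0 ζ) => h.le

variable {Ω' : Type*} [MeasurableSpace Ω'] {P : (Fin d → ℤ) → Measure Ω'}
  {S : ℝ → Ω' → (Fin d → ℤ)}

lemma exists_eventually_lintegral_exp_neg_occTime_le (hz : IsScenery d α μ z) (hS : IsCTSRW d P S)
    (hd : 2 ≤ d) (x : Fin d → ℤ) (hα : 0 < α) {a : ℝ} (ha : 0 < a) (h : a * α < 1) :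
    ∃ κ > (0 : ℝ), ∀ᶠ n : ℕ in atTop,
      ∫⁻ ζ, (∫⁻ ω, ENNReal.ofReal
        (Real.exp (-occTime d S {y | (n : ℝ) ^ a ≤ z y ζ} n ω)) ∂P x) ∂μ
        ≤ ENNReal.ofReal (Real.exp (-(n : ℝ) ^ κ)) := by
  have := hS.prob x
  obtain ⟨γ, aα_lt_γ, γ_lt_one⟩ := exists_between h
  have γ_pos : 0 < γ := (mul_pos ha hα).trans aα_lt_γ
  -- The mean number of visited high sites is at least `n ^ (-γ) * n ^ (1 - 2 * κ) = n ^ κ`.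
  obtain ⟨κ, hκ⟩ : ∃ κ, κ = (1 - γ) / 3 := ⟨_, rfl⟩
  have κ_pos : 0 < κ := by linarith
  have few_sites := hS.eventually_measure_card_range_lt_le hd x κ_pos (by linarith)
  have likely_high := ((tendsto_rpow_atTop ha).comp tendsto_natCast_atTop_atTop).eventually
    (hz.eventually_rpow_neg_le_measureReal hα ((lt_div_iff₀' ha).2 aα_lt_γ))
  have absorb := tendsto_natCast_atTop_atTop.eventually (eventually_mul_exp_neg_mul_rpow_le 2
    (b := 1 / 4) (by norm_num) (half_pos κ_pos).le (half_lt_self κ_pos))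
  refine ⟨κ / 2, half_pos κ_pos, ?_⟩
  filter_upwards [few_sites, likely_high, absorb, eventually_gt_atTop 0]
    with n few_sites likely_high absorb n_pos
  set p := μ.real {ζ | (n : ℝ) ^ a ≤ z 0 ζ}
  have rpow_le_mean : (n : ℝ) ^ κ ≤ p * (n : ℝ) ^ (1 - 2 * κ) := by
    calc (n : ℝ) ^ κ = ((n : ℝ) ^ a) ^ (-(γ / a)) * (n : ℝ) ^ (1 - 2 * κ) := by
          rw [← Real.rpow_mul n.cast_nonneg, ← Real.rpow_add (Nat.cast_pos.2 n_pos)]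
          congr 1
          field_simp
          linarith
      _ ≤ p * (n : ℝ) ^ (1 - 2 * κ) := by gcongr; exact likely_high
  refine ((hz.isIndepRandomSet _).lintegral_exp_neg_occTime_le measureReal_nonneg hS.meas n
    few_sites).trans ?_
  rw [← ENNReal.ofReal_add (Real.exp_nonneg _) (Real.exp_nonneg _)]
  refine ENNReal.ofReal_le_ofReal (le_trans ?_ absorb)
  rw [two_mul (Real.exp _)]
  refine add_le_add (Real.exp_le_exp.2 ?_) (Real.exp_le_exp.2 ?_) <;>
    linarith [Real.rpow_nonneg (Nat.cast_nonneg (α := ℝ) n) κ]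

lemma exists_ae_eventually_measure_occTime_le_one_le (hz : IsScenery d α μ z)
    (hS : IsCTSRW d P S) (hd : 2 ≤ d) (x : Fin d → ℤ) (hα : 0 < α) {a : ℝ} (ha : 0 < a)
    (h : a * α < 1) :
    ∃ c > (0 : ℝ), ∀ᵐ ζ ∂μ, ∀ᶠ n : ℕ in atTop,
      P x {ω | occTime d S {y | (n : ℝ) ^ a ≤ z y ζ} n ω ≤ 1}
        ≤ ENNReal.ofReal (Real.exp (-(n : ℝ) ^ c)) := by
  have := hz.prob
  have := hS.prob x
  obtain ⟨κ, κ_pos, annealed⟩ :=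
    hz.exists_eventually_lintegral_exp_neg_occTime_le hS hd x hα ha h
  obtain ⟨c, c_pos, c_lt_κ⟩ := exists_between κ_pos
  have measurable_lintegral (n : ℕ) : Measurable fun ζ => ∫⁻ ω, ENNReal.ofReal
      (Real.exp (-occTime d S {y | (n : ℝ) ^ a ≤ z y ζ} n ω)) ∂P x :=
    Measurable.lintegral_prod_right' (measurable_occTime_prod
      (𝓗 := fun ζ => {y | (n : ℝ) ^ a ≤ z y ζ}) (hz.isIndepRandomSet _).measurableSet_mem
      hS.meas n).neg.exp.ennreal_ofReal
  have absorb := tendsto_natCast_atTop_atTop.eventually (eventually_mul_exp_neg_mul_rpow_le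
    (Real.exp 1) one_pos (half_pos c_pos).le (half_lt_self c_pos))
  refine ⟨c / 2, half_pos c_pos, ?_⟩
  filter_upwards [ae_eventually_lt_exp_neg_rpow (fun n => (measurable_lintegral n).aemeasurable)
    c_pos c_lt_κ annealed] with ζ quenched
  filter_upwards [quenched, absorb] with n hn absorb
  calc P x {ω | occTime d S {y | (n : ℝ) ^ a ≤ z y ζ} n ω ≤ 1}
      ≤ ENNReal.ofReal (Real.exp 1) * ENNReal.ofReal (Real.exp (-(n : ℝ) ^ c)) :=
        (measure_occTime_le_one_le (P x) _ hS.meas n).trans (mul_le_mul_right hn.le _)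
    _ ≤ ENNReal.ofReal (Real.exp (-(n : ℝ) ^ (c / 2))) := by
        rw [← ENNReal.ofReal_mul (Real.exp_nonneg 1)]
        exact ENNReal.ofReal_le_ofReal (by simpa only [one_mul] using absorb)

end IsScenery

lemma occTime_mono {d : ℕ} {Ω' : Type*} {S : ℝ → Ω' → (Fin d → ℤ)} {ω : Ω'}
    (hS : Measurable fun u => S u ω) {B B' : Set (Fin d → ℤ)} (hB : B ⊆ B') {s t : ℝ}
    (h : s ≤ t) : occTime d S B s ω ≤ occTime d S B' t ω := by
  have integrable (A : Set (Fin d → ℤ)) (r : ℝ) :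
      IntegrableOn (fun u => A.indicator (fun _ => (1 : ℝ)) (S u ω)) (Ioc 0 r) :=
    integrableOn_indicator_comp A.to_countable.measurableSet hS measure_Ioc_lt_top.ne
  calc occTime d S B s ω ≤ occTime d S B' s ω :=
        setIntegral_mono (integrable B s) (integrable B' s) fun u =>
          indicator_le_indicator_of_subset hB (fun _ => zero_le_one) (S u ω)
    _ ≤ occTime d S B' t ω :=
        setIntegral_mono_set (integrable B' t) (ae_of_all _ fun u =>
          indicator_nonneg (fun _ _ => zero_le_one) (S u ω)) (Ioc_subset_Ioc_right h).eventuallyLE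

theorem stmt19_general {d : ℕ} (hd : 2 ≤ d) {α : ℝ} (hα : 0 < α)
    {Ωz Ωw : Type*} [MeasurableSpace Ωz] [MeasurableSpace Ωw]
    {μ : Measure Ωz} {z : (Fin d → ℤ) → Ωz → ℝ} (hz : IsScenery d α μ z)
    {P : (Fin d → ℤ) → Measure Ωw} {S : ℝ → Ωw → (Fin d → ℤ)} (hS : IsCTSRW d P S)
    (x : Fin d → ℤ) {ε : ℝ} (hε : 0 < ε) :
    ∃ c > (0 : ℝ), ∀ᵐ ζ ∂μ, ∀ᶠ t : ℝ in atTop,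
      (P x {ω | occTime d S {y | t ^ (1 / α - ε) ≤ z y ζ} t ω ≤ 1}).toReal
        ≤ Real.exp (-t ^ c) := by
  obtain ⟨a, ha, a_lt⟩ := exists_between
    (max_lt (sub_lt_self (1 / α) hε) (one_div_pos.2 hα))
  obtain ⟨lt_a, a_pos⟩ := max_lt_iff.1 ha
  obtain ⟨c, c_pos, integer_times⟩ := hz.exists_ae_eventually_measure_occTime_le_one_le hS hd x hα
    a_pos ((lt_div_iff₀ hα).1 a_lt)
  refine ⟨c / 2, half_pos c_pos, ?_⟩
  filter_upwards [integer_times] with ζ integer_times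
  filter_upwards [tendsto_nat_floor_atTop.eventually integer_times,
    eventually_rpow_le_floor_rpow a_pos.le lt_a,
    eventually_rpow_le_floor_rpow c_pos.le (half_lt_self c_pos), eventually_ge_atTop 0]
    with t integer_time level_le rate_le t_nonneg
  have occTime_le (ω : Ωw) : occTime d S {y | (⌊t⌋₊ : ℝ) ^ a ≤ z y ζ} ⌊t⌋₊ ω
      ≤ occTime d S {y | t ^ (1 / α - ε) ≤ z y ζ} t ω :=
    occTime_mono (S := S) (hS.meas.comp measurable_prodMk_right) (fun _ => level_le.trans)
      (Nat.floor_le t_nonneg)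
  refine ENNReal.toReal_le_of_le_ofReal (Real.exp_nonneg _) ?_
  calc P x {ω | occTime d S {y | t ^ (1 / α - ε) ≤ z y ζ} t ω ≤ 1}
      ≤ P x {ω | occTime d S {y | (⌊t⌋₊ : ℝ) ^ a ≤ z y ζ} ⌊t⌋₊ ω ≤ 1} :=
        measure_mono fun ω => (occTime_le ω).trans
    _ ≤ ENNReal.ofReal (Real.exp (-(⌊t⌋₊ : ℝ) ^ c)) := integer_time
    _ ≤ ENNReal.ofReal (Real.exp (-t ^ (c / 2))) := by gcongr

/-- Proposition (occupation time of the relevant level set, `d ≥ 2`, `α < 1`): for all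
sufficiently small `ε > 0` there is `c(ε) > 0` such that ℙ-a.s., for all large `t`,
`P₀(ℓ_t(ℋ_*(t)) ≤ 1) ≤ exp(−t^{c(ε)})`, where `ℋ_*(t) = {x ∈ ℤ^d : z(x) ≥ t^{1/α−ε}}`. -/
theorem stmt19 (d : ℕ) (hd : 2 ≤ d) (α : ℝ) (hα₀ : 0 < α) (hα : α < 1)
    {Ωz Ωw : Type*} [MeasurableSpace Ωz] [MeasurableSpace Ωw]
    (μ : Measure Ωz) (z : (Fin d → ℤ) → Ωz → ℝ) (hz : IsScenery d α μ z)
    (P : (Fin d → ℤ) → Measure Ωw) (S : ℝ → Ωw → (Fin d → ℤ)) (hS : IsCTSRW d P S) :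
    ∃ ε₀ > (0 : ℝ), ∀ ε : ℝ, 0 < ε → ε < ε₀ → ∃ c > (0 : ℝ), ∀ᵐ ζ ∂ μ,
      ∀ᶠ t in (atTop : Filter ℝ),
        ((P 0) {ω | occTime d S {x | t ^ (1 / α - ε) ≤ z x ζ} t ω ≤ 1}).toReal
          ≤ Real.exp (-(t ^ c)) :=
  ⟨1, one_pos, fun _ hε _ => stmt19_general hd hα₀ hz hS 0 hε⟩
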